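/- Under the same hypotheses (Gysin sequence with H^* the cohomology of a homotopy (4n+3)-sphere), the graded vector space B^* is isomorphic as a graded vector space to the real cohomology of the quaternionic projective space ℍP^n, i.e., B^{4i} = ℝ for 0 ≤ i ≤ n and B^j = 0 for all other j with 0 ≤ j ≤ 4n. -/

import Mathlib

/-!
Wherever `H` vanishes, exactness of the Gysin sequence makes the Euler class operator `L`, of
degree `d = r + 1` for a fibre of dimension `r`, injective or surjective. If `H` vanishes in all
degrees strictly between `0` and `N`, then `B j` is the image of `B (j - d)` for `0 < j < N`.
Descending from `j` in steps of `d` reaches a negative degree, where `B` vanishes, unless `d`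
divides `j`; along the multiples of `d` below `N` the operator `L` is bijective. A homotopy
`(4n + 3)`-sphere has `r = 3` and `N = 4n + 3`.
-/

section Exactness

variable {R U V W : Type*} [Ring R] [AddCommGroup U] [AddCommGroup V] [AddCommGroup W]
  [Module R U] [Module R V] [Module R W]

theorem injOn_of_exact_of_eq_bot {f : U →ₗ[R] V} {g : V →ₗ[R] W}
    {p : Submodule R U} {q : Submodule R V}
    (hexact : ∀ x ∈ q, g x = 0 → ∃ y ∈ p, f y = x) (hp : p = ⊥) : Set.InjOn g q := by
  refine LinearMap.injOn_of_disjoint_ker le_rfl (LinearMap.disjoint_ker.2 fun x hx hgx ↦ ?_)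
  obtain ⟨y, hy, rfl⟩ := hexact x hx hgx
  rw [(Submodule.eq_bot_iff p).1 hp y hy, map_zero]

theorem surjOn_of_exact_of_eq_bot {f : U →ₗ[R] V} {g : V →ₗ[R] W}
    {p : Submodule R U} {q : Submodule R V} {s : Submodule R W} (hg : ∀ x ∈ q, g x ∈ s)
    (hexact : ∀ x ∈ q, g x = 0 → ∃ y ∈ p, f y = x) (hs : s = ⊥) : Set.SurjOn f p q :=
  fun x hx ↦ hexact x hx ((Submodule.eq_bot_iff s).1 hs _ (hg x hx))

theorem eq_bot_of_surjOn_of_eq_bot {f : U →ₗ[R] V} {p : Submodule R U} {q : Submodule R V}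
    (hf : Set.SurjOn f p q) (hp : p = ⊥) : q = ⊥ := by
  refine (Submodule.eq_bot_iff q).2 fun x hx ↦ ?_
  obtain ⟨y, hy, rfl⟩ := hf hx
  rw [(Submodule.eq_bot_iff p).1 hp y hy, map_zero]

theorem nonempty_linearEquiv_of_bijOn {f : U →ₗ[R] V} {p : Submodule R U} {q : Submodule R V}
    (hf : Set.BijOn f p q) : Nonempty (p ≃ₗ[R] q) :=
  ⟨.ofBijective (f.restrict hf.mapsTo) hf.bijective⟩

end Exactness

section Graded

variable {R V : Type*} [Ring R] [AddCommGroup V] [Module R V] {L : V →ₗ[R] V}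

theorem nonempty_linearEquiv_of_forall_bijOn {B : ℤ → Submodule R V} {d N : ℤ} (hd : 0 < d)
    (hL : ∀ j, 0 ≤ j → j + d < N → Set.BijOn L (B j) (B (j + d))) {i : ℕ} (hi : d * i < N) :
    Nonempty (B 0 ≃ₗ[R] B (d * i)) := by
  induction i with
  | zero =>
    rw [Nat.cast_zero, mul_zero]
    exact ⟨.refl R _⟩
  | succ i ih =>
    rw [Nat.cast_succ, mul_add_one] at hi ⊢
    obtain ⟨e⟩ := ih (by omega)
    obtain ⟨e'⟩ := nonempty_linearEquiv_of_bijOn (hL (d * i) (by positivity) hi)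
    exact ⟨e.trans e'⟩

theorem eq_bot_of_forall_surjOn_of_not_dvd {B : ℤ → Submodule R V} {d N j : ℤ} (hd : 0 < d)
    (hneg : ∀ i < 0, B i = ⊥) (hL : ∀ i, 0 < i → i < N → Set.SurjOn L (B (i - d)) (B i))
    (hj : j < N) (hdvd : ¬ d ∣ j) : B j = ⊥ := by
  obtain hj0 | rfl | hj0 := lt_trichotomy j 0
  · exact hneg j hj0
  · exact absurd (dvd_zero d) hdvd
  · refine eq_bot_of_surjOn_of_eq_bot (hL j hj0 hj) ?_
    exact eq_bot_of_forall_surjOn_of_not_dvd hd hneg hL (by omega) (by rwa [dvd_sub_self_right])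
termination_by j.toNat

end Graded

theorem stmt1_general {R VB VH : Type*} [Ring R] [AddCommGroup VB] [Module R VB]
    [AddCommGroup VH] [Module R VH] {r N : ℤ} (hr : 0 < r)
    (B : ℤ → Submodule R VB) (Hgr : ℤ → Submodule R VH)
    (ι : VB →ₗ[R] VH) (ρ : VH →ₗ[R] VB) (L : VB →ₗ[R] VB)
    (hι : ∀ k, ∀ x ∈ B k, ι x ∈ Hgr k)
    (hL : ∀ k, ∀ x ∈ B k, L x ∈ B (k + (r + 1)))
    (hexL : ∀ k, ∀ x ∈ B (k - r), L x = 0 → ∃ y ∈ Hgr k, ρ y = x)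
    (hexι : ∀ k, ∀ x ∈ B (k + 1), ι x = 0 → ∃ y ∈ B (k - r), L y = x)
    (hH : ∀ i, 0 < i → i < N → Hgr i = ⊥) (hBneg : ∀ i < 0, B i = ⊥) :
    (∀ i : ℕ, (r + 1) * i < N → Nonempty (B 0 ≃ₗ[R] B ((r + 1) * i))) ∧
      ∀ j < N, ¬ (r + 1) ∣ j → B j = ⊥ := by
  have hinj (j : ℤ) (hj : 0 ≤ j) (hjN : j + r < N) : Set.InjOn L (B j) :=
    injOn_of_exact_of_eq_bot (by simpa only [add_sub_cancel_right] using hexL (j + r))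
      (hH _ (by omega) hjN)
  have hsurj (j : ℤ) (hj : 0 < j) (hjN : j < N) : Set.SurjOn L (B (j - (r + 1))) (B j) := by
    have hex := hexι (j - 1)
    rw [sub_add_cancel, sub_sub, add_comm 1 r] at hex
    exact surjOn_of_exact_of_eq_bot (hι j) hex (hH j hj hjN)
  have hbij (j : ℤ) (hj : 0 ≤ j) (hjN : j + (r + 1) < N) :
      Set.BijOn L (B j) (B (j + (r + 1))) :=
    ⟨hL j, hinj j hj (by omega),
      by simpa only [add_sub_cancel_right] using hsurj (j + (r + 1)) (by omega) hjN⟩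
  exact ⟨fun _ ↦ nonempty_linearEquiv_of_forall_bijOn (by omega) hbij,
    fun _ ↦ eq_bot_of_forall_surjOn_of_not_dvd (by omega) hBneg hsurj⟩

/-- under the Gysin-sequence hypotheses for a homotopy
`(4n+3)`-sphere, the basic cohomology `B^*` is that of `ℍP^n` as a graded
vector space. -/
theorem stmt1 (n : ℕ) (VB VH : Type) [AddCommGroup VB] [Module ℝ VB]
    [AddCommGroup VH] [Module ℝ VH]
    (B : ℤ → Submodule ℝ VB) (Hgr : ℤ → Submodule ℝ VH)
    (ι : VB →ₗ[ℝ] VH) (ρ : VH →ₗ[ℝ] VB) (L : VB →ₗ[ℝ] VB)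
    (hι : ∀ k : ℤ, ∀ x ∈ B k, ι x ∈ Hgr k)
    (hρ : ∀ k : ℤ, ∀ y ∈ Hgr k, ρ y ∈ B (k - 3))
    (hL : ∀ k : ℤ, ∀ x ∈ B k, L x ∈ B (k + 4))
    (hexH : ∀ k : ℤ, ∀ y ∈ Hgr k, (ρ y = 0 ↔ ∃ x ∈ B k, ι x = y))
    (hexB1 : ∀ k : ℤ, ∀ x ∈ B (k - 3), (L x = 0 ↔ ∃ y ∈ Hgr k, ρ y = x))
    (hexB2 : ∀ k : ℤ, ∀ x ∈ B (k + 1), (ι x = 0 ↔ ∃ y ∈ B (k - 3), L y = x))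
    (hH1 : Module.finrank ℝ ↥(Hgr 0) = 1)
    (hH2 : Module.finrank ℝ ↥(Hgr (4 * n + 3)) = 1)
    (hH0 : ∀ i : ℤ, i ≠ 0 → i ≠ 4 * n + 3 → Hgr i = ⊥)
    (hB0 : Module.finrank ℝ ↥(B 0) = 1)
    (hBhigh : ∀ i : ℤ, 4 * n < i → B i = ⊥)
    (hBneg : ∀ i : ℤ, i < 0 → B i = ⊥) :
    (∀ i : ℕ, i ≤ n → Module.finrank ℝ ↥(B (4 * i)) = 1) ∧
    (∀ j : ℤ, 0 ≤ j → j ≤ 4 * n → (∀ i : ℕ, i ≤ n → j ≠ 4 * i) → B j = ⊥) := by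
  obtain ⟨hiso, hbot⟩ := stmt1_general (r := 3) (N := 4 * n + 3) (by norm_num) B Hgr ι ρ L hι hL
    (fun k x hx ↦ (hexB1 k x hx).1) (fun k x hx ↦ (hexB2 k x hx).1)
    (fun i hi hiN ↦ hH0 i hi.ne' hiN.ne) hBneg
  exact ⟨fun i hi ↦ (hiso i (by omega)).some.finrank_eq.symm.trans hB0,
    fun j hj hjn hne ↦ hbot j (by omega) fun ⟨c, hc⟩ ↦ hne c.toNat (by omega) (by omega)⟩
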